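/- Let λ_W > 0, λ_H ≥ 0 and fix H₀ ∈ ℝ^{d×Kn}. For each β > 0 let H_{1/β} be a global minimizer of the map H ↦ L(H) + (β/(2Kn))‖H − H₀‖_F²; each such minimizer satisfies the first-order stationarity equation H_{1/β} − H₀ = −(Kn/β) ∇L(H_{1/β}), and moreover lim_{β→∞} β (H_{1/β} − H₀) = −Kn ∇L(H₀). -/

import Mathlib

open Matrix Filter
open scoped BigOperators

noncomputable section

variable {K n d : ℕ}

/-- The one-hot label matrix `Y = I_K ⊗ 1_nᵀ`: columns are indexed by class/sample pairs. -/
def Ymat (K n : ℕ) : Matrix (Fin K) (Fin K × Fin n) ℝ :=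
  Matrix.of fun k p => if p.1 = k then 1 else 0

/-- Squared Frobenius norm. -/
def frobSq {m p : Type*} [Fintype m] [Fintype p] (M : Matrix m p ℝ) : ℝ :=
  ∑ i, ∑ j, (M i j) ^ 2

/-- Frobenius norm. -/
def frobNorm {m p : Type*} [Fintype m] [Fintype p] (M : Matrix m p ℝ) : ℝ :=
  Real.sqrt (frobSq M)

/-- The unconstrained-features objective `g`. -/
def g (lW lH : ℝ) (W : Matrix (Fin K) (Fin d) ℝ)
    (H : Matrix (Fin d) (Fin K × Fin n) ℝ) : ℝ :=
  (1 / (2 * (K : ℝ) * n)) * frobSq (W * H - Ymat K n) +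
    (lW / (2 * (K : ℝ))) * frobSq W + (lH / (2 * (K : ℝ) * n)) * frobSq H

/-- Class means. -/
def classMean (H : Matrix (Fin d) (Fin K × Fin n) ℝ) (k : Fin K) : Fin d → ℝ :=
  fun a => (1 / (n : ℝ)) * ∑ i, H a (k, i)

/-- Global mean. -/
def globalMean (H : Matrix (Fin d) (Fin K × Fin n) ℝ) : Fin d → ℝ :=
  fun a => (1 / ((K : ℝ) * n)) * ∑ p, H a p

/-- Matrix of class means `H̄ ∈ ℝ^{d×K}`. -/
def Hbar (H : Matrix (Fin d) (Fin K × Fin n) ℝ) : Matrix (Fin d) (Fin K) ℝ :=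
  Matrix.of fun a k => classMean H k a

/-- `H̄ ⊗ 1_nᵀ`: the matrix whose n columns of class k all equal the class mean. -/
def HbarSpread (H : Matrix (Fin d) (Fin K × Fin n) ℝ) :
    Matrix (Fin d) (Fin K × Fin n) ℝ :=
  Matrix.of fun a p => classMean H p.1 a

/-- Within-class covariance. -/
def SigmaW (H : Matrix (Fin d) (Fin K × Fin n) ℝ) : Matrix (Fin d) (Fin d) ℝ :=
  Matrix.of fun a b =>
    (1 / ((K : ℝ) * n)) * ∑ p : Fin K × Fin n,
      (H a p - classMean H p.1 a) * (H b p - classMean H p.1 b)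

/-- Between-class covariance. -/
def SigmaB (H : Matrix (Fin d) (Fin K × Fin n) ℝ) : Matrix (Fin d) (Fin d) ℝ :=
  Matrix.of fun a b =>
    (1 / (K : ℝ)) * ∑ k : Fin K,
      (classMean H k a - globalMean H a) * (classMean H k b - globalMean H b)

/-- Non-centered total covariance. -/
def SigmaTtil (H : Matrix (Fin d) (Fin K × Fin n) ℝ) : Matrix (Fin d) (Fin d) ℝ :=
  (1 / ((K : ℝ) * n)) • (H * Hᵀ)

/-- Non-centered between-class covariance. -/
def SigmaBtil (H : Matrix (Fin d) (Fin K × Fin n) ℝ) : Matrix (Fin d) (Fin d) ℝ :=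
  Matrix.of fun a b => (1 / (K : ℝ)) * ∑ k : Fin K, classMean H k a * classMean H k b

/-- The closed-form optimal last-layer weights `W*(H)`. -/
def Wstar (lW : ℝ) (H : Matrix (Fin d) (Fin K × Fin n) ℝ) :
    Matrix (Fin K) (Fin d) ℝ :=
  Ymat K n * Hᵀ * (H * Hᵀ + ((n : ℝ) * lW) • (1 : Matrix (Fin d) (Fin d) ℝ))⁻¹

/-- The central-path loss `L(H)`. -/
def Lcp (lW lH : ℝ) (H : Matrix (Fin d) (Fin K × Fin n) ℝ) : ℝ :=
  (1 / (2 * (K : ℝ) * n)) * frobSq (Wstar lW H * H - Ymat K n) +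
    (lW / (2 * (K : ℝ))) * frobSq (Wstar lW H) +
    (lH / (2 * (K : ℝ) * n)) * frobSq H

/-- `A(H) = Σ̃_T(H) + (λ_W/K) I`. -/
def Amat (lW : ℝ) (H : Matrix (Fin d) (Fin K × Fin n) ℝ) : Matrix (Fin d) (Fin d) ℝ :=
  SigmaTtil H + (lW / (K : ℝ)) • 1

/-- The gradient of the central-path loss w.r.t. the Frobenius inner product. -/
def gradL (lW lH : ℝ) (H : Matrix (Fin d) (Fin K × Fin n) ℝ) :
    Matrix (Fin d) (Fin K × Fin n) ℝ :=
  (1 / ((K : ℝ) ^ 2 * n)) •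
    ((Amat lW H)⁻¹ * (H - HbarSpread H)
      - (Amat lW H)⁻¹ * (SigmaW H + (lW / (K : ℝ)) • 1) * (Amat lW H)⁻¹ * H
      + (lH * (K : ℝ)) • H)

/-- NC1 metric. -/
def NC1til (H : Matrix (Fin d) (Fin K × Fin n) ℝ) : ℝ :=
  (SigmaW H).trace / (SigmaB H).trace

/-! Minimizing the ridge regression loss over `W` gives `L(H) = g(W*(H), H) ≤ g(W, H)`, so freezing
`W = W*(H)` yields a quadratic function of the features which majorizes `L` and touches it at `H`.
The gradient of this majorant at `H` is `Wᵀ (W H - Y) + λ_H H`, up to scaling, and the normal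
equation for `W*(H)` identifies it with `∇L(H)`. A minimizer of `L` plus the proximal term also
minimizes the majorant plus the proximal term, which is the stationarity equation. As `β → ∞` the
penalty forces `H_{1/β} → H₀`, and continuity of `∇L` gives the limit. -/

section Penalty

variable {X : Type*} {f φ : X → ℝ} {x₀ : X} {x : ℝ → X}

/- Comparing `x β` with `x₀`, and a fixed `x β₁` with `x β`, shows that `(β - β₁) * φ (x β)` stays
bounded. -/
theorem tendsto_penalty_zero_of_forall_le (hφ : ∀ y, 0 ≤ φ y) (hφ₀ : φ x₀ = 0)
    (hx : ∀ᶠ β in atTop, ∀ y, f (x β) + β * φ (x β) ≤ f y + β * φ y) :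
    Tendsto (fun β => φ (x β)) atTop (nhds 0) := by
  obtain ⟨β₁, hβ₁⟩ := hx.exists
  have hdecay : Tendsto (fun β => (f x₀ - (f (x β₁) + β₁ * φ (x β₁))) / (β - β₁)) atTop (nhds 0) :=
    (tendsto_atTop_add_const_right _ (-β₁) tendsto_id).const_div_atTop _
  refine tendsto_of_tendsto_of_tendsto_of_le_of_le' tendsto_const_nhds hdecay
    (Eventually.of_forall fun β => hφ (x β)) ?_
  filter_upwards [hx, eventually_gt_atTop β₁] with β hβ hlt
  have hcenter : f (x β) + β * φ (x β) ≤ f x₀ := by simpa only [hφ₀, mul_zero, add_zero] using hβ x₀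
  rw [le_div_iff₀ (sub_pos.mpr hlt)]
  linarith [hβ₁ (x β)]

end Penalty

section Frobenius

variable {m p : Type*} [Fintype m] [Fintype p]

section Norm

open scoped Matrix.Norms.Frobenius

theorem frobNorm_eq_norm (A : Matrix m p ℝ) : frobNorm A = ‖A‖ := by
  simp [frobNorm, frobSq, frobenius_norm_def, Real.sqrt_eq_rpow]

theorem tendsto_frobNorm_zero {ι : Type*} {l : Filter ι} {A : ι → Matrix m p ℝ}
    (hA : Tendsto A l (nhds 0)) : Tendsto (fun i => frobNorm (A i)) l (nhds 0) := by
  simpa only [frobNorm_eq_norm] using tendsto_zero_iff_norm_tendsto_zero.mp hA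

theorem tendsto_of_tendsto_frobSq_sub {ι : Type*} {l : Filter ι} {A : ι → Matrix m p ℝ}
    {B : Matrix m p ℝ} (hA : Tendsto (fun i => frobSq (A i - B)) l (nhds 0)) :
    Tendsto A l (nhds B) := by
  refine tendsto_iff_norm_sub_tendsto_zero.mpr ?_
  simpa only [← frobNorm_eq_norm, frobNorm, Real.sqrt_zero] using hA.sqrt

end Norm

theorem frobSq_nonneg (A : Matrix m p ℝ) : 0 ≤ frobSq A :=
  Finset.sum_nonneg fun _ _ => Finset.sum_nonneg fun _ _ => sq_nonneg _

theorem frobSq_smul (t : ℝ) (A : Matrix m p ℝ) : frobSq (t • A) = t ^ 2 * frobSq A := by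
  simp [frobSq, mul_pow, Finset.mul_sum]

theorem frobSq_eq_trace (A : Matrix m p ℝ) : frobSq A = (Aᵀ * A).trace := by
  rw [frobSq, Finset.sum_comm]
  simp [trace, mul_apply, sq]

theorem frobSq_add (A B : Matrix m p ℝ) :
    frobSq (A + B) = frobSq A + 2 * (Aᵀ * B).trace + frobSq B := by
  have hsymm : (Bᵀ * A).trace = (Aᵀ * B).trace := by
    rw [← trace_transpose, transpose_mul, transpose_transpose]
  simp only [frobSq_eq_trace, transpose_add, Matrix.add_mul, Matrix.mul_add, trace_add, hsymm]
  ring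

theorem eq_zero_of_forall_trace_add_nonneg {G : Matrix m p ℝ} {Q : Matrix m p ℝ → ℝ}
    (hQ : ∀ (t : ℝ) X, Q (t • X) = t ^ 2 * Q X) (h : ∀ X, 0 ≤ (Gᵀ * X).trace + Q X) :
    G = 0 := by
  have hline (t : ℝ) : 0 ≤ Q G * (t * t) + (Gᵀ * G).trace * t + 0 := by
    have hGt := h (t • G)
    rw [hQ, Matrix.mul_smul, trace_smul, smul_eq_mul] at hGt
    linarith
  have hdiscrim := discrim_le_zero hline
  rw [discrim, mul_zero, sub_zero] at hdiscrim
  refine trace_conjTranspose_mul_self_eq_zero_iff.mp ?_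
  rw [conjTranspose_eq_transpose_of_trivial]
  exact pow_eq_zero_iff two_ne_zero |>.mp (le_antisymm hdiscrim (sq_nonneg _))

end Frobenius

section RidgeLoss

variable {m p q : Type*} [Fintype m] [Fintype p] [Fintype q]

/-- The ridge regression loss of the weights `W` for the features `X` (columns are samples) and
targets `Y`, with regularization parameter `c`. -/
def ridgeLoss (c : ℝ) (X : Matrix p q ℝ) (Y : Matrix m q ℝ) (W : Matrix m p ℝ) : ℝ :=
  frobSq (W * X - Y) + c * frobSq W

theorem ridgeLoss_add_weights (c : ℝ) (X : Matrix p q ℝ) (Y : Matrix m q ℝ)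
    (W D : Matrix m p ℝ) :
    ridgeLoss c X Y (W + D) = ridgeLoss c X Y W
      + 2 * (((W * X - Y) * Xᵀ + c • W)ᵀ * D).trace + (frobSq (D * X) + c * frobSq D) := by
  have hres : (W + D) * X - Y = (W * X - Y) + D * X := by rw [Matrix.add_mul]; abel
  have hcross : ((W * X - Y)ᵀ * (D * X)).trace = (((W * X - Y) * Xᵀ)ᵀ * D).trace := by
    rw [transpose_mul, transpose_transpose, ← Matrix.mul_assoc, trace_mul_comm, Matrix.mul_assoc]
  rw [ridgeLoss, hres, frobSq_add, frobSq_add, hcross, transpose_add, Matrix.add_mul, trace_add,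
    transpose_smul, Matrix.smul_mul, trace_smul, smul_eq_mul, ridgeLoss]
  ring

theorem ridgeLoss_add_features (c : ℝ) (X D : Matrix p q ℝ) (Y : Matrix m q ℝ)
    (W : Matrix m p ℝ) :
    ridgeLoss c (X + D) Y W = ridgeLoss c X Y W
      + 2 * ((Wᵀ * (W * X - Y))ᵀ * D).trace + frobSq (W * D) := by
  have hres : W * (X + D) - Y = (W * X - Y) + W * D := by rw [Matrix.mul_add]; abel
  rw [ridgeLoss, hres, frobSq_add, ridgeLoss, transpose_mul, transpose_transpose, Matrix.mul_assoc]
  ring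

end RidgeLoss

section RidgeWeights

variable {m p q : Type*} [Fintype p] [Fintype q] [DecidableEq p] {c : ℝ}

/-- The closed-form minimizer `Y Xᵀ (X Xᵀ + c I)⁻¹` of the ridge regression loss, for `0 < c`. -/
def ridgeWeights (c : ℝ) (X : Matrix p q ℝ) (Y : Matrix m q ℝ) : Matrix m p ℝ :=
  Y * Xᵀ * (X * Xᵀ + c • (1 : Matrix p p ℝ))⁻¹

theorem isUnit_det_mul_transpose_add_smul_one (hc : 0 < c) (X : Matrix p q ℝ) :
    IsUnit (X * Xᵀ + c • (1 : Matrix p p ℝ)).det := by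
  have hgram : (X * Xᵀ).PosSemidef := by simpa using posSemidef_self_mul_conjTranspose X
  exact (PosDef.posSemidef_add hgram (PosDef.one.smul hc)).det_pos.ne'.isUnit

theorem ridgeWeights_mul (hc : 0 < c) (X : Matrix p q ℝ) (Y : Matrix m q ℝ) :
    ridgeWeights c X Y * (X * Xᵀ + c • (1 : Matrix p p ℝ)) = Y * Xᵀ :=
  nonsing_inv_mul_cancel_right _ _ (isUnit_det_mul_transpose_add_smul_one hc X)

theorem ridgeLoss_ridgeWeights_le [Fintype m] (hc : 0 < c) (X : Matrix p q ℝ)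
    (Y : Matrix m q ℝ) (W : Matrix m p ℝ) :
    ridgeLoss c X Y (ridgeWeights c X Y) ≤ ridgeLoss c X Y W := by
  set V := ridgeWeights c X Y with hV
  have hnormal : (V * X - Y) * Xᵀ + c • V = 0 := by
    rw [Matrix.sub_mul, ← ridgeWeights_mul hc X Y, ← hV, Matrix.mul_add, Matrix.mul_smul,
      Matrix.mul_one, Matrix.mul_assoc]
    abel
  have hexpand := ridgeLoss_add_weights c X Y V (W - V)
  rw [hnormal, transpose_zero, Matrix.zero_mul, trace_zero, mul_zero, add_zero,
    add_sub_cancel] at hexpand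
  rw [hexpand]
  exact le_add_of_nonneg_right
    (add_nonneg (frobSq_nonneg _) (mul_nonneg hc.le (frobSq_nonneg _)))

theorem continuous_ridgeWeights (hc : 0 < c) (Y : Matrix m q ℝ) :
    Continuous fun X : Matrix p q ℝ => ridgeWeights c X Y := by
  have hinv : Continuous fun X : Matrix p q ℝ => (X * Xᵀ + c • (1 : Matrix p p ℝ))⁻¹ := by
    refine continuous_iff_continuousAt.mpr fun X => ?_
    refine (continuousAt_matrix_inv _ ?_).comp
      (f := fun X : Matrix p q ℝ => X * Xᵀ + c • (1 : Matrix p p ℝ)) (by fun_prop)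
    rw [Ring.inverse_eq_inv']
    exact continuousAt_inv₀ (isUnit_det_mul_transpose_add_smul_one hc X).ne_zero
  unfold ridgeWeights
  fun_prop

end RidgeWeights

section ClassStatistics

theorem Ymat_mul_transpose_self (K n : ℕ) :
    Ymat K n * (Ymat K n)ᵀ = (n : ℝ) • (1 : Matrix (Fin K) (Fin K) ℝ) := by
  ext k l
  obtain rfl | hkl := eq_or_ne k l
  · simp [mul_apply, Ymat, Fintype.sum_prod_type_right]
  · simp [mul_apply, Ymat, Fintype.sum_prod_type_right, hkl, hkl.symm]

theorem mul_transpose_Ymat (hn : 0 < n) (H : Matrix (Fin d) (Fin K × Fin n) ℝ) :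
    H * (Ymat K n)ᵀ = (n : ℝ) • Hbar H := by
  ext a k
  simp [mul_apply, Ymat, Hbar, classMean, Fintype.sum_prod_type_right, hn.ne']

theorem Hbar_mul_Ymat (H : Matrix (Fin d) (Fin K × Fin n) ℝ) :
    Hbar H * Ymat K n = HbarSpread H := by
  ext a p
  simp [mul_apply, Ymat, Hbar, HbarSpread]

theorem SigmaW_eq_smul_mul_transpose (H : Matrix (Fin d) (Fin K × Fin n) ℝ) :
    SigmaW H = (1 / ((K : ℝ) * n)) • ((H - HbarSpread H) * (H - HbarSpread H)ᵀ) :=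
  rfl

theorem SigmaW_eq_SigmaTtil_sub (hn : 0 < n) (H : Matrix (Fin d) (Fin K × Fin n) ℝ) :
    SigmaW H = SigmaTtil H - (1 / (K : ℝ)) • (Hbar H * (Hbar H)ᵀ) := by
  have hcross : H * (Hbar H * Ymat K n)ᵀ = (n : ℝ) • (Hbar H * (Hbar H)ᵀ) := by
    rw [transpose_mul, ← Matrix.mul_assoc, mul_transpose_Ymat hn, Matrix.smul_mul]
  have hcross' : Hbar H * Ymat K n * Hᵀ = (n : ℝ) • (Hbar H * (Hbar H)ᵀ) := by
    simpa only [transpose_mul, transpose_smul, transpose_transpose, Matrix.mul_assoc]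
      using congrArg transpose hcross
  have hspread : Hbar H * Ymat K n * (Hbar H * Ymat K n)ᵀ = (n : ℝ) • (Hbar H * (Hbar H)ᵀ) := by
    rw [transpose_mul, Matrix.mul_assoc, ← Matrix.mul_assoc (Ymat K n), Ymat_mul_transpose_self,
      Matrix.smul_mul, Matrix.one_mul, Matrix.mul_smul]
  rw [SigmaW_eq_smul_mul_transpose, ← Hbar_mul_Ymat, transpose_sub, Matrix.mul_sub,
    Matrix.sub_mul, Matrix.sub_mul, hcross, hcross', hspread, sub_self, sub_zero, smul_sub,
    smul_smul, SigmaTtil]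
  congr 2
  field_simp

end ClassStatistics

section CentralPath

variable {lW : ℝ}

theorem mul_transpose_add_smul_one_eq_smul_Amat (hK : 0 < K) (hn : 0 < n) (lW : ℝ)
    (H : Matrix (Fin d) (Fin K × Fin n) ℝ) :
    H * Hᵀ + ((n : ℝ) * lW) • (1 : Matrix (Fin d) (Fin d) ℝ) = ((K : ℝ) * n) • Amat lW H := by
  rw [Amat, SigmaTtil, smul_add, smul_smul, smul_smul, mul_one_div_cancel (by positivity),
    one_smul]
  congr 2
  field_simp

theorem transpose_Amat (lW : ℝ) (H : Matrix (Fin d) (Fin K × Fin n) ℝ) :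
    (Amat lW H)ᵀ = Amat lW H := by
  simp [Amat, SigmaTtil]

theorem isUnit_det_Amat (hK : 0 < K) (hn : 0 < n) (hlW : 0 < lW)
    (H : Matrix (Fin d) (Fin K × Fin n) ℝ) : IsUnit (Amat lW H).det := by
  have hgram := isUnit_det_mul_transpose_add_smul_one (c := (n : ℝ) * lW) (by positivity) H
  rw [mul_transpose_add_smul_one_eq_smul_Amat hK hn, det_smul] at hgram
  exact isUnit_of_mul_isUnit_right hgram

theorem Wstar_eq_ridgeWeights (lW : ℝ) (H : Matrix (Fin d) (Fin K × Fin n) ℝ) :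
    Wstar lW H = ridgeWeights ((n : ℝ) * lW) H (Ymat K n) :=
  rfl

theorem smul_Wstar (hK : 0 < K) (hn : 0 < n) (hlW : 0 < lW)
    (H : Matrix (Fin d) (Fin K × Fin n) ℝ) :
    (K : ℝ) • Wstar lW H = (Hbar H)ᵀ * (Amat lW H)⁻¹ := by
  have hn' : (n : ℝ) ≠ 0 := by positivity
  have hY : Ymat K n * Hᵀ = (n : ℝ) • (Hbar H)ᵀ := by
    simpa only [transpose_mul, transpose_smul, transpose_transpose]
      using congrArg transpose (mul_transpose_Ymat hn H)
  have hnormal := ridgeWeights_mul (c := (n : ℝ) * lW) (by positivity) H (Ymat K n)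
  rw [← Wstar_eq_ridgeWeights, mul_transpose_add_smul_one_eq_smul_Amat hK hn, hY, Matrix.mul_smul,
    mul_comm, mul_smul] at hnormal
  rw [← smul_right_injective _ hn' hnormal, Matrix.smul_mul,
    mul_nonsing_inv_cancel_right _ _ (isUnit_det_Amat hK hn hlW H)]

theorem smul_transpose_Wstar (hK : 0 < K) (hn : 0 < n) (hlW : 0 < lW)
    (H : Matrix (Fin d) (Fin K × Fin n) ℝ) :
    (K : ℝ) • (Wstar lW H)ᵀ = (Amat lW H)⁻¹ * Hbar H := by
  simpa only [transpose_mul, transpose_smul, transpose_transpose, transpose_nonsing_inv,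
    transpose_Amat] using congrArg transpose (smul_Wstar hK hn hlW H)

theorem inv_Amat_mul_SigmaW_mul_inv_Amat (hK : 0 < K) (hn : 0 < n) (hlW : 0 < lW)
    (H : Matrix (Fin d) (Fin K × Fin n) ℝ) :
    (Amat lW H)⁻¹ * (SigmaW H + (lW / (K : ℝ)) • 1) * (Amat lW H)⁻¹
      = (Amat lW H)⁻¹ - (K : ℝ) • ((Wstar lW H)ᵀ * Wstar lW H) := by
  have hK' : (K : ℝ) ≠ 0 := by positivity
  have hS : SigmaW H + (lW / (K : ℝ)) • 1 = Amat lW H - (1 / (K : ℝ)) • (Hbar H * (Hbar H)ᵀ) := by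
    rw [SigmaW_eq_SigmaTtil_sub hn, Amat]
    abel
  have hWW : (Amat lW H)⁻¹ * (Hbar H * (Hbar H)ᵀ) * (Amat lW H)⁻¹
      = ((K : ℝ) * K) • ((Wstar lW H)ᵀ * Wstar lW H) := by
    rw [← Matrix.mul_assoc, Matrix.mul_assoc, ← smul_transpose_Wstar hK hn hlW,
      ← smul_Wstar hK hn hlW, Matrix.smul_mul, Matrix.mul_smul, smul_smul]
  rw [hS, Matrix.mul_sub, nonsing_inv_mul _ (isUnit_det_Amat hK hn hlW H), Matrix.sub_mul,
    Matrix.one_mul, Matrix.mul_smul, Matrix.smul_mul, hWW, smul_smul, ← mul_assoc,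
    one_div_mul_cancel hK', one_mul]

theorem gradL_eq (hK : 0 < K) (hn : 0 < n) (hlW : 0 < lW) (lH : ℝ)
    (H : Matrix (Fin d) (Fin K × Fin n) ℝ) :
    gradL lW lH H
      = (1 / ((K : ℝ) * n)) • ((Wstar lW H)ᵀ * (Wstar lW H * H - Ymat K n) + lH • H) := by
  have hK' : (K : ℝ) ≠ 0 := by positivity
  have hY : (Amat lW H)⁻¹ * HbarSpread H = (K : ℝ) • ((Wstar lW H)ᵀ * Ymat K n) := by
    rw [← Hbar_mul_Ymat, ← Matrix.mul_assoc, ← smul_transpose_Wstar hK hn hlW, Matrix.smul_mul]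
  have hbracket : (Amat lW H)⁻¹ * (H - HbarSpread H)
      - (Amat lW H)⁻¹ * (SigmaW H + (lW / (K : ℝ)) • 1) * (Amat lW H)⁻¹ * H + (lH * (K : ℝ)) • H
      = (K : ℝ) • ((Wstar lW H)ᵀ * (Wstar lW H * H - Ymat K n) + lH • H) := by
    rw [inv_Amat_mul_SigmaW_mul_inv_Amat hK hn hlW, Matrix.mul_sub, hY, Matrix.sub_mul,
      Matrix.smul_mul, Matrix.mul_sub, ← Matrix.mul_assoc, smul_add, smul_sub, smul_smul,
      mul_comm lH]
    abel
  rw [gradL, hbracket, smul_smul]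
  congr 1
  field_simp

theorem continuous_gradL (hK : 0 < K) (hn : 0 < n) (hlW : 0 < lW) (lH : ℝ) :
    Continuous fun H : Matrix (Fin d) (Fin K × Fin n) ℝ => gradL lW lH H := by
  have hW : Continuous fun H : Matrix (Fin d) (Fin K × Fin n) ℝ => Wstar lW H :=
    continuous_ridgeWeights (by positivity) (Ymat K n)
  simp only [gradL_eq hK hn hlW]
  fun_prop

theorem g_eq_mul_ridgeLoss_add (hn : 0 < n) (lW lH : ℝ) (W : Matrix (Fin K) (Fin d) ℝ)
    (H : Matrix (Fin d) (Fin K × Fin n) ℝ) :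
    g lW lH W H
      = 1 / (2 * (K : ℝ) * n) * (ridgeLoss (n * lW) H (Ymat K n) W + lH * frobSq H) := by
  rw [g, ridgeLoss]
  field_simp

theorem Lcp_le_g (hn : 0 < n) (hlW : 0 < lW) (lH : ℝ) (W : Matrix (Fin K) (Fin d) ℝ)
    (H : Matrix (Fin d) (Fin K × Fin n) ℝ) : Lcp lW lH H ≤ g lW lH W H := by
  change g lW lH (Wstar lW H) H ≤ g lW lH W H
  rw [g_eq_mul_ridgeLoss_add hn, g_eq_mul_ridgeLoss_add hn, Wstar_eq_ridgeWeights]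
  gcongr
  exact ridgeLoss_ridgeWeights_le (by positivity) H (Ymat K n) W

theorem Lcp_add_le (hK : 0 < K) (hn : 0 < n) (hlW : 0 < lW) (lH : ℝ)
    (H X : Matrix (Fin d) (Fin K × Fin n) ℝ) :
    Lcp lW lH (H + X) ≤ Lcp lW lH H + ((gradL lW lH H)ᵀ * X).trace
      + 1 / (2 * (K : ℝ) * n) * (frobSq (Wstar lW H * X) + lH * frobSq X) := by
  refine (Lcp_le_g hn hlW lH (Wstar lW H) (H + X)).trans_eq ?_
  rw [show Lcp lW lH H = g lW lH (Wstar lW H) H from rfl, g_eq_mul_ridgeLoss_add hn,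
    g_eq_mul_ridgeLoss_add hn, ridgeLoss_add_features, frobSq_add, gradL_eq hK hn hlW,
    transpose_smul, transpose_add, transpose_smul, Matrix.smul_mul, Matrix.add_mul,
    Matrix.smul_mul, trace_smul, trace_add, trace_smul, smul_eq_mul, smul_eq_mul]
  field_simp
  ring

/-- The proximal objective `L(H) + (β/(2Kn))‖H − H₀‖_F²` with centre `H₀`. -/
def proxLoss (lW lH β : ℝ) (H₀ H : Matrix (Fin d) (Fin K × Fin n) ℝ) : ℝ :=
  Lcp lW lH H + (β / (2 * (K : ℝ) * n)) * frobSq (H - H₀)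

theorem smul_sub_eq_neg_smul_gradL_of_proxLoss_le (hK : 0 < K) (hn : 0 < n) (hlW : 0 < lW)
    {lH β : ℝ} {H₀ H : Matrix (Fin d) (Fin K × Fin n) ℝ}
    (hmin : ∀ H', proxLoss lW lH β H₀ H ≤ proxLoss lW lH β H₀ H') :
    β • (H - H₀) = -(((K : ℝ) * n) • gradL lW lH H) := by
  have hKn : (K : ℝ) * n ≠ 0 := by positivity
  suffices hgrad : gradL lW lH H + (β / ((K : ℝ) * n)) • (H - H₀) = 0 by
    rw [eq_neg_of_add_eq_zero_left hgrad, smul_neg, neg_neg, smul_smul, mul_div_cancel₀ _ hKn]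
  refine eq_zero_of_forall_trace_add_nonneg
    (Q := fun X => 1 / (2 * (K : ℝ) * n) * (frobSq (Wstar lW H * X) + (lH + β) * frobSq X))
    (fun t X => ?_) fun X => ?_
  · rw [Matrix.mul_smul, frobSq_smul, frobSq_smul]
    ring
  · have hle := (hmin (H + X)).trans (add_le_add_left (Lcp_add_le hK hn hlW lH H X) _)
    rw [proxLoss, add_sub_right_comm, frobSq_add] at hle
    rw [transpose_add, transpose_smul, Matrix.add_mul, Matrix.smul_mul, trace_add, trace_smul,
      smul_eq_mul]
    have hcoef : β / ((K : ℝ) * n) = 2 * (β / (2 * (K : ℝ) * n)) := by field_simp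
    rw [hcoef]
    linear_combination hle

theorem tendsto_of_eventually_proxLoss_le (hK : 0 < K) (hn : 0 < n) {lH : ℝ}
    {H₀ : Matrix (Fin d) (Fin K × Fin n) ℝ} {Hm : ℝ → Matrix (Fin d) (Fin K × Fin n) ℝ}
    (hmin : ∀ᶠ β in atTop, ∀ H', proxLoss lW lH β H₀ (Hm β) ≤ proxLoss lW lH β H₀ H') :
    Tendsto Hm atTop (nhds H₀) := by
  have hpenalty : Tendsto (fun β => 1 / (2 * (K : ℝ) * n) * frobSq (Hm β - H₀)) atTop (nhds 0) := by
    refine tendsto_penalty_zero_of_forall_le (f := Lcp lW lH) (x₀ := H₀) (x := Hm)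
      (φ := fun H => 1 / (2 * (K : ℝ) * n) * frobSq (H - H₀))
      (fun H => mul_nonneg (by positivity) (frobSq_nonneg _)) (by simp [frobSq]) ?_
    simpa only [proxLoss, ← mul_assoc, mul_one_div] using hmin
  refine tendsto_of_tendsto_frobSq_sub ?_
  simpa only [← mul_assoc, mul_one_div_cancel (show 2 * (K : ℝ) * n ≠ 0 by positivity), one_mul,
    mul_zero] using hpenalty.const_mul (2 * (K : ℝ) * n)

end CentralPath

theorem proximal_minimizer_stationarity_and_limit_general
    {K n d : ℕ} (hK : 0 < K) (hn : 0 < n) {lW lH : ℝ} (hlW : 0 < lW)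
    {H₀ : Matrix (Fin d) (Fin K × Fin n) ℝ} {Hm : ℝ → Matrix (Fin d) (Fin K × Fin n) ℝ}
    {β₀ : ℝ} (hβ₀ : 0 ≤ β₀)
    (hmin : ∀ β : ℝ, β₀ < β → ∀ H', proxLoss lW lH β H₀ (Hm β) ≤ proxLoss lW lH β H₀ H') :
    (∀ β : ℝ, β₀ < β → Hm β - H₀ = (-((K : ℝ) * n / β)) • gradL lW lH (Hm β)) ∧
    Tendsto (fun β => frobNorm (β • (Hm β - H₀) + ((K : ℝ) * n) • gradL lW lH H₀))
      atTop (nhds 0) := by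
  have hstat (β : ℝ) (hβ : β₀ < β) :
      β • (Hm β - H₀) = -(((K : ℝ) * n) • gradL lW lH (Hm β)) :=
    smul_sub_eq_neg_smul_gradL_of_proxLoss_le hK hn hlW (hmin β hβ)
  refine ⟨fun β hβ => ?_, tendsto_frobNorm_zero ?_⟩
  · rw [← inv_smul_smul₀ (hβ₀.trans_lt hβ).ne' (Hm β - H₀), hstat β hβ, ← neg_smul, smul_smul]
    ring_nf
  · have hlim : Tendsto Hm atTop (nhds H₀) :=
      tendsto_of_eventually_proxLoss_le hK hn ((eventually_gt_atTop β₀).mono hmin)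
    have hgrad : Tendsto (fun β => gradL lW lH (Hm β)) atTop (nhds (gradL lW lH H₀)) :=
      ((continuous_gradL hK hn hlW lH).tendsto H₀).comp hlim
    have hsum : Tendsto (fun β => -(((K : ℝ) * n) • gradL lW lH (Hm β))
        + ((K : ℝ) * n) • gradL lW lH H₀) atTop (nhds 0) := by
      simpa only [neg_add_cancel] using
        (hgrad.const_smul ((K : ℝ) * n)).neg.add_const (((K : ℝ) * n) • gradL lW lH H₀)
    refine hsum.congr' ?_
    filter_upwards [eventually_gt_atTop β₀] with β hβ
    rw [hstat β hβ]

/-- every global minimizer `H_{1/β}` of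
`H ↦ L(H) + (β/(2Kn))‖H − H₀‖_F²` satisfies the first-order stationarity equation
`H_{1/β} − H₀ = −(Kn/β) ∇L(H_{1/β})`, and `β(H_{1/β} − H₀) → −Kn ∇L(H₀)` as `β → ∞`. -/
theorem proximal_minimizer_stationarity_and_limit
    (K n d : ℕ) (hK : 0 < K) (hn : 0 < n) (hdK : K ≤ d)
    (lW lH : ℝ) (hlW : 0 < lW) (hlH : 0 ≤ lH)
    (H₀ : Matrix (Fin d) (Fin K × Fin n) ℝ)
    (Hm : ℝ → Matrix (Fin d) (Fin K × Fin n) ℝ)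
    (hmin : ∀ β : ℝ, 0 < β →
      ∀ H' : Matrix (Fin d) (Fin K × Fin n) ℝ,
        Lcp lW lH (Hm β) + (β / (2 * (K : ℝ) * n)) * frobSq (Hm β - H₀)
          ≤ Lcp lW lH H' + (β / (2 * (K : ℝ) * n)) * frobSq (H' - H₀)) :
    (∀ β : ℝ, 0 < β →
      Hm β - H₀ = (-((K : ℝ) * n / β)) • gradL lW lH (Hm β)) ∧
    Filter.Tendsto
      (fun β => frobNorm (β • (Hm β - H₀) + ((K : ℝ) * n) • gradL lW lH H₀))
      Filter.atTop (nhds 0) := by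
  exact proximal_minimizer_stationarity_and_limit_general hK hn hlW le_rfl hmin

end
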